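/- There exists a constant C > 0 depending only on the dimension n such that for every x₀ ∈ ∂Ω₀, with e = x₀/|x₀|, and every 0 < r ≤ 1/6, one has (h₊(x₀ − r·e)/r) · (h₋(x₀ + r·e)/r) ≤ C. -/

import Mathlib

/-!
Write `u = h₊`, `v = h₋`. The proof is a maximum principle for the two-point quotient
`Q(x, y) = u(x) v(y) / |x - y|²` over the two disjoint domains.

Suppose `Q` has an interior local maximum `M > 0` at `(x, y)`, so that `u(p) v(q) - M |p - q|²` has
a local maximum `0` there, and put `z = x - y`. The first-order conditions are
`v(y) ∇u(x) = 2 M z` and `u(x) ∇v(y) = -2 M z`. Now move `x` by `w` and `y` by `ρ w`, where `ρ` is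
the reflection in the hyperplane orthogonal to `z`. Then `x - y` stays a multiple of `z`, the
Laplacian in `w` of `M |x - y|²` is `8 M`, and the cross term `2 ⟪∇u(x), ρ ∇v(y)⟫` of the Laplacian
of the product is also `8 M`. What remains is `u(x) Δv(y) + v(y) Δu(x) ≤ 0`, which is impossible if
`u` and `v` are strictly subharmonic; a small multiple of `|x|² - c` makes them so.

Hence `Q` is bounded by its values on pairs with a boundary point. At such a pair one of `u`, `v`
vanishes, or one of the points lies on the inner or the outer sphere and `|x - y| ≥ δ`, the width of
the collars; as `0 ≤ u, v ≤ 1`, this gives `Q ≤ δ⁻²`. Finally, by star-shapedness `x₀ - r e` and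
`x₀ + r e` lie in the two domains, and their distance is `2 r`.
-/

open Metric Set

noncomputable def lapl {n : ℕ} (f : EuclideanSpace ℝ (Fin n) → ℝ)
    (x : EuclideanSpace ℝ (Fin n)) : ℝ :=
  ∑ i : Fin n, fderiv ℝ (fun y => fderiv ℝ f y (EuclideanSpace.single i (1:ℝ))) x
    (EuclideanSpace.single i (1:ℝ))

def IsHarmonicOn {n : ℕ} (f : EuclideanSpace ℝ (Fin n) → ℝ)
    (U : Set (EuclideanSpace ℝ (Fin n))) : Prop :=
  ContDiffOn ℝ 2 f U ∧ ∀ x ∈ U, lapl f x = 0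

open Filter Topology InnerProductSpace
open scoped Laplacian Gradient RealInnerProductSpace

section SecondDerivative

theorem deriv_deriv_nonpos_of_isLocalMax {φ : ℝ → ℝ} {a : ℝ} (hφ : ContinuousAt φ a)
    (hmax : IsLocalMax φ a) : deriv (deriv φ) a ≤ 0 := by
  by_contra! hpos
  have hmin : IsLocalMin φ a := isLocalMin_of_deriv_deriv_pos hpos hmax.deriv_eq_zero hφ
  have hconst : φ =ᶠ[𝓝 a] fun _ => φ a := by
    filter_upwards [hmin, hmax] with t hge hle using le_antisymm hle hge
  simp [hconst.deriv.deriv_eq] at hpos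

variable {F : Type*} [NormedAddCommGroup F] [NormedSpace ℝ F] {f g : F → ℝ} {x : F}

theorem eventually_differentiableAt_of_contDiffAt_two (hf : ContDiffAt ℝ 2 f x) :
    ∀ᶠ y in 𝓝 x, DifferentiableAt ℝ f y :=
  (hf.eventually (by simp)).mono fun _ hy => hy.differentiableAt two_ne_zero

theorem differentiableAt_fderiv_of_contDiffAt_two (hf : ContDiffAt ℝ 2 f x) :
    DifferentiableAt ℝ (fderiv ℝ f) x :=
  (hf.fderiv_right (m := 1) one_add_one_eq_two.le).differentiableAt one_ne_zero

theorem deriv_deriv_comp_line (hf : ContDiffAt ℝ 2 f x) (v : F) :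
    deriv (deriv fun t : ℝ => f (x + t • v)) 0 = fderiv ℝ (fderiv ℝ f) x v v := by
  have hline (t : ℝ) : HasDerivAt (fun t : ℝ => x + t • v) v t := by
    simpa using ((hasDerivAt_id t).smul_const v).const_add x
  have hlim : Tendsto (fun t : ℝ => x + t • v) (𝓝 0) (𝓝 x) := by
    simpa using (hline 0).continuousAt.tendsto
  have hfirst : deriv (fun t : ℝ => f (x + t • v)) =ᶠ[𝓝 0] fun t => fderiv ℝ f (x + t • v) v := by
    filter_upwards [hlim.eventually (eventually_differentiableAt_of_contDiffAt_two hf)] with t ht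
    exact (ht.hasFDerivAt.comp_hasDerivAt t (hline t)).deriv
  have hsecond : HasDerivAt (fun t : ℝ => fderiv ℝ f (x + t • v)) (fderiv ℝ (fderiv ℝ f) x v) 0 :=
    (differentiableAt_fderiv_of_contDiffAt_two hf).hasFDerivAt.comp_hasDerivAt_of_eq 0 (hline 0)
      (by simp)
  rw [hfirst.deriv_eq]
  simpa using (hsecond.clm_apply (hasDerivAt_const (0 : ℝ) v)).deriv

theorem fderiv_fderiv_nonpos_of_isLocalMax (hf : ContDiffAt ℝ 2 f x) (hmax : IsLocalMax f x)
    (v : F) : fderiv ℝ (fderiv ℝ f) x v v ≤ 0 := by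
  have hline : Continuous fun t : ℝ => x + t • v := by fun_prop
  have hx : x = x + (0 : ℝ) • v := by simp
  rw [← deriv_deriv_comp_line hf v]
  refine deriv_deriv_nonpos_of_isLocalMax ?_ ?_
  · exact hf.continuousAt.comp_of_eq hline.continuousAt hx.symm
  · exact IsLocalMax.comp_continuous (f := f) (by rwa [← hx]) hline.continuousAt

theorem fderiv_fderiv_mul_apply (hf : ContDiffAt ℝ 2 f x) (hg : ContDiffAt ℝ 2 g x) (v w : F) :
    fderiv ℝ (fderiv ℝ (f * g)) x v w =
      f x * fderiv ℝ (fderiv ℝ g) x v w + g x * fderiv ℝ (fderiv ℝ f) x v w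
        + (fderiv ℝ f x v * fderiv ℝ g x w + fderiv ℝ g x v * fderiv ℝ f x w) := by
  have hfirst : fderiv ℝ (f * g) =ᶠ[𝓝 x] fun y => f y • fderiv ℝ g y + g y • fderiv ℝ f y := by
    filter_upwards [eventually_differentiableAt_of_contDiffAt_two hf,
      eventually_differentiableAt_of_contDiffAt_two hg] with y hfy hgy using fderiv_mul hfy hgy
  have hdf := hf.differentiableAt two_ne_zero
  have hdg := hg.differentiableAt two_ne_zero
  have hddf := differentiableAt_fderiv_of_contDiffAt_two hf
  have hddg := differentiableAt_fderiv_of_contDiffAt_two hg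
  rw [hfirst.fderiv_eq, fderiv_fun_add (hdf.fun_smul hddg) (hdg.fun_smul hddf),
    fderiv_fun_smul hdf hddg, fderiv_fun_smul hdg hddf]
  simp only [add_apply, smul_apply, ContinuousLinearMap.smulRight_apply, smul_eq_mul]
  ring

end SecondDerivative

section Laplacian

variable {E E' : Type*} [NormedAddCommGroup E] [InnerProductSpace ℝ E] [FiniteDimensional ℝ E]
  [NormedAddCommGroup E'] [InnerProductSpace ℝ E'] [FiniteDimensional ℝ E']

theorem laplacian_eq_sum_fderiv_fderiv {ι : Type*} [Fintype ι] (b : OrthonormalBasis ι ℝ E)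
    (f : E → ℝ) (x : E) : Δ f x = ∑ i, fderiv ℝ (fderiv ℝ f) x (b i) (b i) := by
  simp [laplacian_eq_iteratedFDeriv_orthonormalBasis f b, iteratedFDeriv_two_apply]

theorem laplacian_nonpos_of_isLocalMax {f : E → ℝ} {x : E} (hf : ContDiffAt ℝ 2 f x)
    (hmax : IsLocalMax f x) : Δ f x ≤ 0 := by
  rw [laplacian_eq_sum_fderiv_fderiv (stdOrthonormalBasis ℝ E)]
  exact Finset.sum_nonpos fun i _ => fderiv_fderiv_nonpos_of_isLocalMax hf hmax _

theorem laplacian_mul {f g : E → ℝ} {x : E} (hf : ContDiffAt ℝ 2 f x) (hg : ContDiffAt ℝ 2 g x) :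
    Δ (f * g) x = f x * Δ g x + g x * Δ f x + 2 * ⟪∇ f x, ∇ g x⟫ := by
  let b := stdOrthonormalBasis ℝ E
  have hgrad : ∑ i, fderiv ℝ f x (b i) * fderiv ℝ g x (b i) = ⟪∇ f x, ∇ g x⟫ := by
    rw [← b.sum_inner_mul_inner]
    simp only [inner_gradient_left, inner_gradient_right, conj_trivial]
  have hterm (i) : fderiv ℝ (fderiv ℝ (f * g)) x (b i) (b i) =
      f x * fderiv ℝ (fderiv ℝ g) x (b i) (b i) + g x * fderiv ℝ (fderiv ℝ f) x (b i) (b i)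
        + 2 * (fderiv ℝ f x (b i) * fderiv ℝ g x (b i)) := by
    rw [fderiv_fderiv_mul_apply hf hg]; ring
  simp only [laplacian_eq_sum_fderiv_fderiv b, hterm, Finset.sum_add_distrib, ← Finset.mul_sum,
    hgrad]

theorem laplacian_norm_sq (x : E) : Δ (fun y : E => ‖y‖ ^ 2) x = 2 * Module.finrank ℝ E := by
  have hfirst : fderiv ℝ (fun y : E => ‖y‖ ^ 2) = ((2 : ℝ) • innerSL ℝ : E →L[ℝ] E →L[ℝ] ℝ) := by
    ext; simp [two_mul]
  have hsecond : fderiv ℝ (fderiv ℝ fun y : E => ‖y‖ ^ 2) x = (2 : ℝ) • innerSL ℝ := by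
    rw [hfirst]
    exact ContinuousLinearMap.fderiv _
  have happly (v : E) : fderiv ℝ (fderiv ℝ fun y : E => ‖y‖ ^ 2) x v v = 2 * ⟪v, v⟫ :=
    congrArg (fun L => L v v) hsecond
  simp [laplacian_eq_sum_fderiv_fderiv (stdOrthonormalBasis ℝ E), happly, mul_comm]

theorem gradient_comp_add_linearIsometryEquiv (f : E' → ℝ) (A : E ≃ₗᵢ[ℝ] E') (y : E') (w : E) :
    ∇ (fun w => f (y + A w)) w = A.symm (∇ f (y + A w)) := by
  refine ext_inner_right ℝ fun v => ?_
  have hcomp := A.toContinuousLinearEquiv.comp_right_fderiv (f := fun w => f (y + w)) (x := w)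
  rw [fderiv_comp_add_left] at hcomp
  rw [A.symm.inner_map_eq_flip, inner_gradient_left, inner_gradient_left]
  exact congrArg (· v) hcomp

theorem laplacian_comp_add_linearIsometryEquiv (f : E' → ℝ) (A : E ≃ₗᵢ[ℝ] E') (y : E') (w : E) :
    Δ (fun w => f (y + A w)) w = Δ f (y + A w) := by
  let b := stdOrthonormalBasis ℝ E
  have hcomp := A.toContinuousLinearEquiv.iteratedFDerivWithin_comp_right (fun w => f (y + w))
    uniqueDiffOn_univ (x := w) (mem_univ _) 2
  simp only [preimage_univ, iteratedFDerivWithin_univ, iteratedFDeriv_comp_add_left] at hcomp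
  rw [laplacian_eq_iteratedFDeriv_orthonormalBasis _ b,
    laplacian_eq_iteratedFDeriv_orthonormalBasis f (b.map A)]
  refine Finset.sum_congr rfl fun i _ => ?_
  refine (congrArg (· ![b i, b i]) hcomp).trans ?_
  simp [iteratedFDeriv_two_apply]

theorem laplacian_mul_comp_add_linearIsometryEquiv {f : E → ℝ} {g : E' → ℝ} {x : E} {y : E'}
    (hf : ContDiffAt ℝ 2 f x) (hg : ContDiffAt ℝ 2 g y) (A : E ≃ₗᵢ[ℝ] E') :
    Δ (fun w => f (x + w) * g (y + A w)) 0 =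
      f x * Δ g y + g y * Δ f x + 2 * ⟪∇ f x, A.symm (∇ g y)⟫ := by
  have hf' : ContDiffAt ℝ 2 (fun w => f (x + w)) 0 :=
    ContDiffAt.comp 0 (by simpa using hf) (by fun_prop)
  have hg' : ContDiffAt ℝ 2 (fun w => g (y + A w)) 0 :=
    ContDiffAt.comp 0 (by simpa using hg) (by fun_prop)
  have hΔf := laplacian_comp_add_linearIsometryEquiv f (.refl ℝ E) x 0
  have hΔg := laplacian_comp_add_linearIsometryEquiv g A y 0
  have hgradf := gradient_comp_add_linearIsometryEquiv f (.refl ℝ E) x 0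
  have hgradg := gradient_comp_add_linearIsometryEquiv g A y 0
  simp only [LinearIsometryEquiv.coe_refl, id_eq, map_zero, add_zero] at hΔf hΔg hgradf hgradg
  refine (laplacian_mul hf' hg').trans ?_
  simp only [hΔf, hΔg, hgradf, hgradg, map_zero, add_zero]
  rfl

theorem laplacian_sq_const_add_inner (c : ℝ) (a x : E) :
    Δ (fun w => (c + ⟪a, w⟫) ^ 2) x = 2 * ‖a‖ ^ 2 := by
  have hderiv (w : E) : HasFDerivAt (fun w => c + ⟪a, w⟫) (innerSL ℝ a) w :=
    (innerSL ℝ a).hasFDerivAt.const_add c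
  have hfirst : fderiv ℝ (fun w => c + ⟪a, w⟫) = fun _ => innerSL ℝ a :=
    funext fun w => (hderiv w).fderiv
  have hgrad : ∇ (fun w => c + ⟪a, w⟫) x = a :=
    ext_inner_right ℝ fun v => by rw [inner_gradient_left, hfirst, innerSL_apply_apply]
  have hΔ : Δ (fun w => c + ⟪a, w⟫) x = 0 := by
    simp [laplacian_eq_sum_fderiv_fderiv (stdOrthonormalBasis ℝ E), hfirst]
  have hsmooth : ContDiffAt ℝ 2 (fun w => c + ⟪a, w⟫) x :=
    contDiffAt_const.add (contDiffAt_const.inner ℝ contDiffAt_id)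
  have hmul := laplacian_mul hsmooth hsmooth
  rw [hΔ, hgrad, mul_zero, add_zero, zero_add, real_inner_self_eq_norm_sq] at hmul
  rw [← hmul, ← sq]
  rfl

end Laplacian

section QuadraticPerturbation

variable {E : Type*} [NormedAddCommGroup E]

/-- The function `u + ε (|x|² - c)`: for `ε > 0` its Laplacian exceeds `Δ u` by a positive
constant, and for `c` large it lies below `u - ε` on a given bounded set. -/
def quadraticPerturbation (u : E → ℝ) (c ε : ℝ) (x : E) : ℝ :=
  u x + ε * (‖x‖ ^ 2 - c)

theorem quadraticPerturbation_le_sub {u : E → ℝ} {c ε : ℝ} {x : E} (hε : 0 ≤ ε)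
    (hx : ‖x‖ ^ 2 + 1 ≤ c) : quadraticPerturbation u c ε x ≤ u x - ε := by
  unfold quadraticPerturbation
  nlinarith

theorem tendsto_quadraticPerturbation (u : E → ℝ) (c : ℝ) (x : E) :
    Tendsto (fun ε => quadraticPerturbation u c ε x) (𝓝[>] 0) (𝓝 (u x)) := by
  have hcont : Continuous fun ε : ℝ => u x + ε * (‖x‖ ^ 2 - c) := by fun_prop
  simpa [quadraticPerturbation] using (hcont.tendsto 0).mono_left nhdsWithin_le_nhds

theorem exists_norm_sq_add_one_le_of_isBounded {D : Set E} (hD : Bornology.IsBounded D) :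
    ∃ c : ℝ, ∀ x ∈ closure D, ‖x‖ ^ 2 + 1 ≤ c := by
  obtain ⟨R, hR⟩ := hD.closure.exists_norm_le
  exact ⟨R ^ 2 + 1, fun x hx => by gcongr; exact hR x hx⟩

end QuadraticPerturbation

section MaximumPrinciple

variable {E : Type*} [NormedAddCommGroup E] [InnerProductSpace ℝ E] [FiniteDimensional ℝ E]
  {u : E → ℝ} {D : Set E}

/-- `u` is of class `C²` with `0 ≤ Δ u` in `D`, and continuous up to the boundary of `D`: the
classical, pointwise notion of subharmonicity on an open set `D`. -/
structure SubharmonicContOnCl (u : E → ℝ) (D : Set E) : Prop where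
  contDiffAt : ∀ x ∈ D, ContDiffAt ℝ 2 u x
  laplacian_nonneg : ∀ x ∈ D, 0 ≤ Δ u x
  continuousOn : ContinuousOn u (closure D)

/-- The variant of `SubharmonicContOnCl` with `0 < Δ u` in `D`, for which maximum principles follow
directly from the second derivative test. -/
structure StrictSubharmonicContOnCl (u : E → ℝ) (D : Set E) : Prop where
  contDiffAt : ∀ x ∈ D, ContDiffAt ℝ 2 u x
  laplacian_pos : ∀ x ∈ D, 0 < Δ u x
  continuousOn : ContinuousOn u (closure D)

theorem SubharmonicContOnCl.of_harmonicContOnCl (hu : HarmonicContOnCl u D) :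
    SubharmonicContOnCl u D where
  contDiffAt _ hx := hu.contDiffAt hx
  laplacian_nonneg x hx := (hu.harmonicOnNhd x hx).2.self_of_nhds.ge
  continuousOn := hu.continuousOn

theorem laplacian_quadraticPerturbation {x : E} (hu : ContDiffAt ℝ 2 u x) (c ε : ℝ) :
    Δ (quadraticPerturbation u c ε) x = Δ u x + ε * (2 * Module.finrank ℝ E) := by
  have hsq : ContDiffAt ℝ 2 (fun y : E => ‖y‖ ^ 2) x := (contDiff_norm_sq ℝ).contDiffAt
  have hconst : ContDiffAt ℝ 2 (fun _ : E => c) x := contDiffAt_const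
  have hsub : ContDiffAt ℝ 2 ((fun y : E => ‖y‖ ^ 2) - fun _ => c) x := hsq.sub hconst
  have hsmul : ContDiffAt ℝ 2 (ε • ((fun y : E => ‖y‖ ^ 2) - fun _ => c)) x := hsub.const_smul ε
  refine (hu.laplacian_add hsmul).trans ?_
  rw [laplacian_smul ε hsub, hsq.laplacian_sub hconst, laplacian_norm_sq]
  simp

theorem SubharmonicContOnCl.strictSubharmonicContOnCl_quadraticPerturbation [Nontrivial E]
    (hu : SubharmonicContOnCl u D) (c : ℝ) {ε : ℝ} (hε : 0 < ε) :
    StrictSubharmonicContOnCl (quadraticPerturbation u c ε) D where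
  contDiffAt x hx := (hu.contDiffAt x hx).add
    (contDiffAt_const.mul ((contDiff_norm_sq ℝ).contDiffAt.sub contDiffAt_const))
  laplacian_pos x hx := by
    have hdim : (0 : ℝ) < Module.finrank ℝ E := mod_cast Module.finrank_pos
    rw [laplacian_quadraticPerturbation (hu.contDiffAt x hx)]
    exact add_pos_of_nonneg_of_pos (hu.laplacian_nonneg x hx) (by positivity)
  continuousOn := hu.continuousOn.add (by fun_prop)

theorem StrictSubharmonicContOnCl.exists_mem_frontier_ge (hu : StrictSubharmonicContOnCl u D)
    (hD : IsOpen D) (hb : Bornology.IsBounded D) {x : E} (hx : x ∈ closure D) :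
    ∃ y ∈ frontier D, u x ≤ u y := by
  obtain ⟨y, hy, hmax⟩ := hb.isCompact_closure.exists_isMaxOn ⟨x, hx⟩ hu.continuousOn
  refine ⟨y, ?_, hmax hx⟩
  rw [hD.frontier_eq]
  refine ⟨hy, fun hyD => (hu.laplacian_pos y hyD).not_ge ?_⟩
  exact laplacian_nonpos_of_isLocalMax (hu.contDiffAt y hyD)
    ((hmax.on_subset subset_closure).isLocalMax (hD.mem_nhds hyD))

theorem SubharmonicContOnCl.le_of_frontier_le [Nontrivial E] (hu : SubharmonicContOnCl u D)
    (hD : IsOpen D) (hb : Bornology.IsBounded D) {M : ℝ} (hM : ∀ x ∈ frontier D, u x ≤ M)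
    {x : E} (hx : x ∈ closure D) : u x ≤ M := by
  obtain ⟨c, hc⟩ := exists_norm_sq_add_one_le_of_isBounded hb
  refine le_of_tendsto (tendsto_quadraticPerturbation u c x) ?_
  filter_upwards [self_mem_nhdsWithin] with ε (hε : 0 < ε)
  obtain ⟨y, hy, hxy⟩ :=
    (hu.strictSubharmonicContOnCl_quadraticPerturbation c hε).exists_mem_frontier_ge hD hb hx
  have hle := quadraticPerturbation_le_sub (u := u) hε.le (hc y (frontier_subset_closure hy))
  linarith [hM y hy]

theorem mem_Icc_of_harmonicContOnCl [Nontrivial E] (hu : HarmonicContOnCl u D) (hD : IsOpen D)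
    (hb : Bornology.IsBounded D) {m M : ℝ} (hf : ∀ x ∈ frontier D, u x ∈ Icc m M) {x : E}
    (hx : x ∈ closure D) : u x ∈ Icc m M := by
  have hupper := SubharmonicContOnCl.of_harmonicContOnCl hu
  have hlower := SubharmonicContOnCl.of_harmonicContOnCl hu.neg
  exact ⟨neg_le_neg_iff.mp
      (hlower.le_of_frontier_le hD hb (fun y hy => neg_le_neg (hf y hy).1) hx),
    hupper.le_of_frontier_le hD hb (fun y hy => (hf y hy).2) hx⟩

theorem mem_Icc_zero_one_of_harmonicContOnCl [Nontrivial E] {S T : Set E}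
    (hu : HarmonicContOnCl u D) (hD : IsOpen D) (hb : Bornology.IsBounded D)
    (hST : frontier D ⊆ S ∪ T) (hS : ∀ x ∈ S, u x = 0) (hT : ∀ x ∈ T, u x = 1) {x : E}
    (hx : x ∈ closure D) : u x ∈ Icc 0 1 := by
  refine mem_Icc_of_harmonicContOnCl hu hD hb (fun z hz => ?_) hx
  rcases hST hz with hz | hz
  · simp [hS z hz]
  · simp [hT z hz]

end MaximumPrinciple

section Reflection

variable {E : Type*} [NormedAddCommGroup E] [InnerProductSpace ℝ E]

theorem add_sub_reflection_eq_smul (z w : E) :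
    z + (w - (ℝ ∙ z)ᗮ.reflection w) = (1 + 2 * ⟪z, w⟫ / ‖z‖ ^ 2) • z := by
  rw [Submodule.reflection_orthogonal_apply, Submodule.reflection_singleton_apply]
  simp only [RCLike.ofReal_real_eq_id, id_eq]
  module

theorem laplacian_norm_add_sub_reflection_sq [FiniteDimensional ℝ E] {z : E} (hz : z ≠ 0) :
    Δ (fun w => ‖z + (w - (ℝ ∙ z)ᗮ.reflection w)‖ ^ 2) 0 = 8 := by
  have hz' : ‖z‖ ≠ 0 := norm_ne_zero_iff.mpr hz
  have heq : (fun w => ‖z + (w - (ℝ ∙ z)ᗮ.reflection w)‖ ^ 2) =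
      ‖z‖ ^ 2 • fun w => (1 + ⟪(2 / ‖z‖ ^ 2) • z, w⟫) ^ 2 := by
    ext w
    rw [add_sub_reflection_eq_smul, norm_smul, mul_pow, Real.norm_eq_abs, sq_abs, Pi.smul_apply,
      real_inner_smul_left, smul_eq_mul]
    ring
  have hsmooth : ContDiffAt ℝ 2 (fun w => (1 + ⟪(2 / ‖z‖ ^ 2) • z, w⟫) ^ 2) 0 :=
    (contDiffAt_const.add (contDiffAt_const.inner ℝ contDiffAt_id)).pow 2
  rw [heq, laplacian_smul _ hsmooth, laplacian_sq_const_add_inner, norm_smul, norm_div,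
    norm_pow, norm_norm, Real.norm_ofNat, smul_eq_mul]
  field_simp
  norm_num

end Reflection

section TwoPointQuotient

variable {E : Type*} [NormedAddCommGroup E]

theorem norm_sub_sq_pos {x y : E} (hxy : x ≠ y) : 0 < ‖x - y‖ ^ 2 :=
  pow_pos (norm_sub_pos_iff.mpr hxy) 2

/-- The functional `u(x) v(y) / |x - y|²` of a pair of points; it takes the value `0` on the
diagonal. -/
noncomputable def twoPointQuotient (u v : E → ℝ) (p : E × E) : ℝ :=
  u p.1 * v p.2 / ‖p.1 - p.2‖ ^ 2

theorem exists_isMaxOn_twoPointQuotient [ProperSpace E] {u v : E → ℝ} {D₁ D₂ : Set E}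
    (hu : ContinuousOn u (closure D₁)) (hv : ContinuousOn v (closure D₂))
    (hb₁ : Bornology.IsBounded D₁) (hb₂ : Bornology.IsBounded D₂)
    (hne : ∀ x ∈ closure D₁, ∀ y ∈ closure D₂, 0 ≤ u x → 0 ≤ v y → x ≠ y)
    {p q : E} (hp : p ∈ closure D₁) (hq : q ∈ closure D₂) (hup : 0 ≤ u p) (hvq : 0 ≤ v q) :
    ∃ z ∈ (closure D₁ ∩ u ⁻¹' Ici 0) ×ˢ (closure D₂ ∩ v ⁻¹' Ici 0),
      IsMaxOn (twoPointQuotient u v)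
        ((closure D₁ ∩ u ⁻¹' Ici 0) ×ˢ (closure D₂ ∩ v ⁻¹' Ici 0)) z := by
  have hcompact₁ : IsCompact (closure D₁ ∩ u ⁻¹' Ici 0) :=
    hb₁.isCompact_closure.of_isClosed_subset
      (hu.preimage_isClosed_of_isClosed isClosed_closure isClosed_Ici) inter_subset_left
  have hcompact₂ : IsCompact (closure D₂ ∩ v ⁻¹' Ici 0) :=
    hb₂.isCompact_closure.of_isClosed_subset
      (hv.preimage_isClosed_of_isClosed isClosed_closure isClosed_Ici) inter_subset_left
  refine (hcompact₁.prod hcompact₂).exists_isMaxOn ⟨(p, q), ⟨hp, hup⟩, hq, hvq⟩ ?_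
  refine ContinuousOn.div ?_ (by fun_prop) ?_
  · exact (hu.comp continuousOn_fst fun z hz => hz.1.1).mul
      (hv.comp continuousOn_snd fun z hz => hz.2.1)
  · rintro z ⟨⟨hz₁, huz⟩, hz₂, hvz⟩
    exact (norm_sub_sq_pos (hne _ hz₁ _ hz₂ huz hvz)).ne'

theorem ne_of_boundary_mul_le {u v : E → ℝ} {D₁ D₂ : Set E} (hD : Disjoint D₁ D₂) {M : ℝ}
    (hbd : ∀ x ∈ closure D₁, ∀ y ∈ closure D₂, 0 < u x → 0 < v y → (x ∉ D₁ ∨ y ∉ D₂) →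
      u x * v y ≤ M * ‖x - y‖ ^ 2)
    {x y : E} (hx : x ∈ closure D₁) (hy : y ∈ closure D₂) (hux : 0 < u x) (hvy : 0 < v y) :
    x ≠ y := by
  rintro rfl
  have hle := hbd x hx x hy hux hvy (not_and_or.mp fun h => disjoint_left.mp hD h.1 h.2)
  rw [sub_self, norm_zero, zero_pow two_ne_zero, mul_zero] at hle
  exact (mul_pos hux hvy).not_ge hle

end TwoPointQuotient

theorem isLocalMax_sub_mul_of_isLocalMax_div {X : Type*} [TopologicalSpace X] {f g : X → ℝ} {a : X}
    (hg : ∀ᶠ z in 𝓝 a, 0 < g z) (hmax : IsLocalMax (fun z => f z / g z) a) :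
    IsLocalMax (fun z => f z - f a / g a * g z) a := by
  filter_upwards [hg, hmax] with z hgz hz
  rw [div_mul_cancel₀ _ hg.self_of_nhds.ne', sub_self, sub_nonpos]
  exact (div_le_iff₀ hgz).mp hz

section SecondOrderCondition

variable {E : Type*} [NormedAddCommGroup E] [InnerProductSpace ℝ E] [FiniteDimensional ℝ E]
  {u v : E → ℝ} {x y : E} {M : ℝ}

theorem smul_gradient_eq_of_isLocalMax {c : ℝ} (hu : DifferentiableAt ℝ u x)
    (hmax : IsLocalMax (fun p => c * u p - M * ‖p - y‖ ^ 2) x) :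
    c • ∇ u x = (2 * M) • (x - y) := by
  refine ext_inner_right ℝ fun w => ?_
  have hsq : HasFDerivAt (fun p => ‖p - y‖ ^ 2) ((2 : ℝ) • innerSL ℝ (x - y)) x := by
    simpa [two_smul] using ((hasFDerivAt_id x).sub_const y).norm_sq
  have hzero := hmax.hasFDerivAt_eq_zero ((hu.hasFDerivAt.const_mul c).sub (hsq.const_mul M))
  have hw : c * fderiv ℝ u x w - M * (2 * ⟪x - y, w⟫) = 0 := congrArg (· w) hzero
  rw [real_inner_smul_left, real_inner_smul_left, inner_gradient_left]
  linarith

theorem inner_gradient_reflection_gradient_of_isLocalMax (hu : DifferentiableAt ℝ u x)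
    (hv : DifferentiableAt ℝ v y) (hux : u x ≠ 0) (hvy : v y ≠ 0)
    (hM : u x * v y = M * ‖x - y‖ ^ 2)
    (hmax : IsLocalMax (fun p : E × E => u p.1 * v p.2 - M * ‖p.1 - p.2‖ ^ 2) (x, y)) :
    ⟪∇ u x, (ℝ ∙ (x - y))ᗮ.reflection (∇ v y)⟫ = 4 * M := by
  have hgradu : v y • ∇ u x = (2 * M) • (x - y) := by
    refine smul_gradient_eq_of_isLocalMax hu ?_
    simpa only [mul_comm (v y), Function.comp_def] using
      hmax.comp_continuous (g := fun p => (p, y)) (b := x) (by fun_prop)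
  have hgradv : u x • ∇ v y = (2 * M) • (y - x) := by
    refine smul_gradient_eq_of_isLocalMax hv ?_
    simpa only [norm_sub_rev x, Function.comp_def] using
      hmax.comp_continuous (g := fun p => (x, p)) (b := y) (by fun_prop)
  refine mul_left_cancel₀ (mul_ne_zero hvy hux) ?_
  calc v y * u x * ⟪∇ u x, (ℝ ∙ (x - y))ᗮ.reflection (∇ v y)⟫
      = ⟪v y • ∇ u x, (ℝ ∙ (x - y))ᗮ.reflection (u x • ∇ v y)⟫ := by
        rw [map_smul, real_inner_smul_left, real_inner_smul_right, mul_assoc]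
    _ = ⟪(2 * M) • (x - y), (2 * M) • (x - y)⟫ := by
        rw [hgradu, hgradv, map_smul, ← neg_sub x y, map_neg,
          Submodule.reflection_orthogonalComplement_singleton_eq_neg, neg_neg]
    _ = v y * u x * (4 * M) := by
        rw [real_inner_smul_left, real_inner_smul_right, real_inner_self_eq_norm_sq, mul_comm (v y),
          hM]
        ring

theorem mul_laplacian_add_mul_laplacian_nonpos_of_isLocalMax (hu : ContDiffAt ℝ 2 u x)
    (hv : ContDiffAt ℝ 2 v y) (hux : u x ≠ 0) (hvy : v y ≠ 0) (hxy : x ≠ y)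
    (hM : u x * v y = M * ‖x - y‖ ^ 2)
    (hmax : IsLocalMax (fun p : E × E => u p.1 * v p.2 - M * ‖p.1 - p.2‖ ^ 2) (x, y)) :
    u x * Δ v y + v y * Δ u x ≤ 0 := by
  let ρ := (ℝ ∙ (x - y))ᗮ.reflection
  let product : E → ℝ := fun w => u (x + w) * v (y + ρ w)
  let distSq : E → ℝ := fun w => ‖x - y + (w - ρ w)‖ ^ 2
  have hproduct : ContDiffAt ℝ 2 product 0 :=
    ContDiffAt.mul (ContDiffAt.comp 0 (by simpa using hu) (by fun_prop))
      (ContDiffAt.comp 0 (by simpa using hv) (by fun_prop))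
  have hdistSq : ContDiffAt ℝ 2 distSq 0 :=
    ContDiffAt.norm_sq ℝ (by fun_prop)
  have hMdistSq : ContDiffAt ℝ 2 (M • distSq) 0 := hdistSq.const_smul M
  have hmax' : IsLocalMax (product - M • distSq) 0 := by
    have hcomp : product - M • distSq =
        (fun p : E × E => u p.1 * v p.2 - M * ‖p.1 - p.2‖ ^ 2) ∘ fun w => (x + w, y + ρ w) := by
      ext w
      simp only [product, distSq, Pi.sub_apply, Pi.smul_apply, smul_eq_mul, Function.comp_apply,
        add_sub_add_comm]
    rw [hcomp]
    exact IsLocalMax.comp_continuous (by simpa using hmax) (by fun_prop)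
  have hΔ : Δ (product - M • distSq) 0 ≤ 0 :=
    laplacian_nonpos_of_isLocalMax (hproduct.sub hMdistSq) hmax'
  rw [hproduct.laplacian_sub hMdistSq, laplacian_smul M hdistSq,
    laplacian_norm_add_sub_reflection_sq (sub_ne_zero.mpr hxy),
    laplacian_mul_comp_add_linearIsometryEquiv hu hv ρ, Submodule.reflection_symm,
    inner_gradient_reflection_gradient_of_isLocalMax (hu.differentiableAt two_ne_zero)
      (hv.differentiableAt two_ne_zero) hux hvy hM hmax, smul_eq_mul] at hΔ
  linarith

theorem not_isLocalMax_twoPointQuotient (hu : ContDiffAt ℝ 2 u x) (hv : ContDiffAt ℝ 2 v y)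
    (hux : 0 < u x) (hvy : 0 < v y) (hΔu : 0 < Δ u x) (hΔv : 0 < Δ v y) (hxy : x ≠ y) :
    ¬ IsLocalMax (twoPointQuotient u v) (x, y) := by
  intro hmax
  have hne : ∀ᶠ p : E × E in 𝓝 (x, y), p.1 ≠ p.2 :=
    (isOpen_ne_fun continuous_fst continuous_snd).mem_nhds hxy
  have hmax' := isLocalMax_sub_mul_of_isLocalMax_div (hne.mono fun _ => norm_sub_sq_pos) hmax
  have hΔ := mul_laplacian_add_mul_laplacian_nonpos_of_isLocalMax hu hv hux.ne' hvy.ne' hxy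
    (div_mul_cancel₀ _ (norm_sub_sq_pos hxy).ne').symm hmax'
  have : 0 < u x * Δ v y + v y * Δ u x := by positivity
  exact this.not_ge hΔ

end SecondOrderCondition

section TwoPointMaximumPrinciple

variable {E : Type*} [NormedAddCommGroup E] [InnerProductSpace ℝ E] [FiniteDimensional ℝ E]
  {u v : E → ℝ} {D₁ D₂ : Set E}

theorem StrictSubharmonicContOnCl.exists_boundary_twoPointQuotient_ge
    (hu : StrictSubharmonicContOnCl u D₁) (hv : StrictSubharmonicContOnCl v D₂)
    (hD₁ : IsOpen D₁) (hD₂ : IsOpen D₂) (hb₁ : Bornology.IsBounded D₁)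
    (hb₂ : Bornology.IsBounded D₂)
    (hne : ∀ x ∈ closure D₁, ∀ y ∈ closure D₂, 0 ≤ u x → 0 ≤ v y → x ≠ y)
    {p q : E} (hp : p ∈ closure D₁) (hq : q ∈ closure D₂) (hup : 0 < u p) (hvq : 0 < v q) :
    ∃ x ∈ closure D₁, ∃ y ∈ closure D₂, (x ∉ D₁ ∨ y ∉ D₂) ∧ 0 < u x ∧ 0 < v y ∧
      twoPointQuotient u v (p, q) ≤ twoPointQuotient u v (x, y) := by
  obtain ⟨⟨x, y⟩, ⟨⟨hx, hux₀⟩, hy, hvy₀⟩, hmax⟩ := exists_isMaxOn_twoPointQuotient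
    hu.continuousOn hv.continuousOn hb₁ hb₂ hne hp hq hup.le hvq.le
  have hle : twoPointQuotient u v (p, q) ≤ twoPointQuotient u v (x, y) :=
    hmax ⟨⟨hp, hup.le⟩, hq, hvq.le⟩
  have hpq : 0 < twoPointQuotient u v (p, q) :=
    div_pos (mul_pos hup hvq) (norm_sub_sq_pos (hne p hp q hq hup.le hvq.le))
  have huv : u x * v y ≠ 0 := (div_ne_zero_iff.mp (hpq.trans_le hle).ne').1
  have hux : 0 < u x := lt_of_le_of_ne hux₀ (left_ne_zero_of_mul huv).symm
  have hvy : 0 < v y := lt_of_le_of_ne hvy₀ (right_ne_zero_of_mul huv).symm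
  refine ⟨x, hx, y, hy, ?_, hux, hvy, hle⟩
  by_contra! hint
  have hu_pos := (hu.contDiffAt x hint.1).continuousAt.eventually_const_lt hux
  have hv_pos := (hv.contDiffAt y hint.2).continuousAt.eventually_const_lt hvy
  refine not_isLocalMax_twoPointQuotient (hu.contDiffAt x hint.1) (hv.contDiffAt y hint.2) hux hvy
    (hu.laplacian_pos x hint.1) (hv.laplacian_pos y hint.2) (hne x hx y hy hux₀ hvy₀)
    (hmax.isLocalMax (prod_mem_nhds ?_ ?_))
  · filter_upwards [hD₁.mem_nhds hint.1, hu_pos] with w hw huw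
    exact ⟨subset_closure hw, huw.le⟩
  · filter_upwards [hD₂.mem_nhds hint.2, hv_pos] with w hw hvw
    exact ⟨subset_closure hw, hvw.le⟩

theorem SubharmonicContOnCl.mul_le_mul_norm_sub_sq [Nontrivial E]
    (hu : SubharmonicContOnCl u D₁) (hv : SubharmonicContOnCl v D₂)
    (hD₁ : IsOpen D₁) (hD₂ : IsOpen D₂) (hb₁ : Bornology.IsBounded D₁)
    (hb₂ : Bornology.IsBounded D₂) (hD : Disjoint D₁ D₂) {M : ℝ}
    (hbd : ∀ x ∈ closure D₁, ∀ y ∈ closure D₂, 0 < u x → 0 < v y → (x ∉ D₁ ∨ y ∉ D₂) →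
      u x * v y ≤ M * ‖x - y‖ ^ 2)
    {p q : E} (hp : p ∈ closure D₁) (hq : q ∈ closure D₂) (hup : 0 < u p) (hvq : 0 < v q) :
    u p * v q ≤ M * ‖p - q‖ ^ 2 := by
  have hne (x) (hx : x ∈ closure D₁) (y) (hy : y ∈ closure D₂) (hux : 0 < u x) (hvy : 0 < v y) :
      x ≠ y := ne_of_boundary_mul_le hD hbd hx hy hux hvy
  obtain ⟨c₁, hc₁⟩ := exists_norm_sq_add_one_le_of_isBounded hb₁
  obtain ⟨c₂, hc₂⟩ := exists_norm_sq_add_one_le_of_isBounded hb₂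
  have hlimu := tendsto_quadraticPerturbation u c₁ p
  have hlimv := tendsto_quadraticPerturbation v c₂ q
  by_contra! hlt
  obtain ⟨ε, hε, hUp, hVq, hUV⟩ := (eventually_mem_nhdsWithin.and <|
    (hlimu.eventually_const_lt hup).and <| (hlimv.eventually_const_lt hvq).and <|
    (hlimu.mul hlimv).eventually_const_lt hlt).exists
  replace hε : 0 < ε := hε
  have hleu (x) (hx : x ∈ closure D₁) := quadraticPerturbation_le_sub (u := u) hε.le (hc₁ x hx)
  have hlev (y) (hy : y ∈ closure D₂) := quadraticPerturbation_le_sub (u := v) hε.le (hc₂ y hy)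
  obtain ⟨x, hx, y, hy, hxy, hUx, hVy, hle⟩ :=
    (hu.strictSubharmonicContOnCl_quadraticPerturbation c₁ hε).exists_boundary_twoPointQuotient_ge
      (hv.strictSubharmonicContOnCl_quadraticPerturbation c₂ hε) hD₁ hD₂ hb₁ hb₂
      (fun x hx y hy hUx hVy => hne x hx y hy (by linarith [hleu x hx]) (by linarith [hlev y hy]))
      hp hq hUp hVq
  have hux : quadraticPerturbation u c₁ ε x ≤ u x := by linarith [hleu x hx]
  have hvy : quadraticPerturbation v c₂ ε y ≤ v y := by linarith [hlev y hy]
  have hxy_ne := hne x hx y hy (hUx.trans_le hux) (hVy.trans_le hvy)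
  have hM : M < M := calc
    M < twoPointQuotient (quadraticPerturbation u c₁ ε) (quadraticPerturbation v c₂ ε) (p, q) :=
      (lt_div_iff₀ (norm_sub_sq_pos (hne p hp q hq hup hvq))).mpr hUV
    _ ≤ twoPointQuotient (quadraticPerturbation u c₁ ε) (quadraticPerturbation v c₂ ε) (x, y) := hle
    _ ≤ u x * v y / ‖x - y‖ ^ 2 := by
      unfold twoPointQuotient; gcongr; exact hUx.le.trans hux
    _ ≤ M := (div_le_iff₀ (norm_sub_sq_pos hxy_ne)).mpr
      (hbd x hx y hy (hUx.trans_le hux) (hVy.trans_le hvy) hxy)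
  exact hM.false

end TwoPointMaximumPrinciple

section StarShaped

variable {E : Type*} [NormedAddCommGroup E] [NormedSpace ℝ E] {Ω : Set E} {x : E} {a R r t : ℝ}

theorem smul_mem_of_mem_closure (hstar : ∀ᶠ y in 𝓝 (0 : E), StarConvex ℝ y Ω)
    (hx : x ∈ closure Ω) (ht₀ : 0 ≤ t) (ht₁ : t < 1) : t • x ∈ Ω := by
  have hlim : Tendsto (fun w => (t / (1 - t)) • (x - w)) (𝓝 x) (𝓝 0) := by
    have hcont : Continuous fun w => (t / (1 - t)) • (x - w) := by fun_prop
    simpa using hcont.tendsto x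
  obtain ⟨w, hw, hstarw⟩ :=
    ((mem_closure_iff_frequently.mp hx).and_eventually (hlim.eventually hstar)).exists
  have hmem := hstarw hw (sub_nonneg.mpr ht₁.le) ht₀ (sub_add_cancel 1 t)
  rw [smul_smul, mul_div_cancel₀ _ (sub_pos.mpr ht₁).ne', smul_sub, sub_add_cancel] at hmem
  exact hmem

theorem smul_notMem_closure_of_notMem (hstar : ∀ᶠ y in 𝓝 (0 : E), StarConvex ℝ y Ω)
    (hx : x ∉ Ω) (ht : 1 < t) : t • x ∉ closure Ω := by
  intro htx
  have ht₀ : 0 < t := one_pos.trans ht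
  refine hx ?_
  simpa [smul_smul, ht₀.ne'] using
    smul_mem_of_mem_closure hstar htx (inv_pos.mpr ht₀).le (inv_lt_one_of_one_lt₀ ht)

theorem sub_smul_mem_diff_closedBall (hstar : ∀ᶠ y in 𝓝 (0 : E), StarConvex ℝ y Ω) (ha : 0 ≤ a)
    (hx : x ∈ closure Ω) (hr : 0 < r) (hax : a + r < ‖x‖) :
    x - r • (‖x‖⁻¹ • x) ∈ Ω \ closedBall 0 a := by
  have hpos : 0 < ‖x‖ := by linarith
  have heq : x - r • (‖x‖⁻¹ • x) = (1 - r / ‖x‖) • x := by module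
  have hlt : r / ‖x‖ < 1 := (div_lt_one hpos).mpr (by linarith)
  rw [heq]
  refine ⟨smul_mem_of_mem_closure hstar hx (by linarith) (by linarith [div_pos hr hpos]), ?_⟩
  rw [mem_closedBall_zero_iff, norm_smul, Real.norm_of_nonneg (by linarith), sub_mul,
    div_mul_cancel₀ _ hpos.ne']
  linarith

theorem add_smul_mem_ball_diff_closure (hstar : ∀ᶠ y in 𝓝 (0 : E), StarConvex ℝ y Ω)
    (hx₀ : x ≠ 0) (hx : x ∉ Ω) (hr : 0 < r) (hxR : ‖x‖ + r < R) :
    x + r • (‖x‖⁻¹ • x) ∈ ball 0 R \ closure Ω := by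
  have hpos : 0 < ‖x‖ := norm_pos_iff.mpr hx₀
  have heq : x + r • (‖x‖⁻¹ • x) = (1 + r / ‖x‖) • x := by module
  have hratio : 0 < r / ‖x‖ := div_pos hr hpos
  rw [heq]
  refine ⟨?_, smul_notMem_closure_of_notMem hstar hx (by linarith)⟩
  rw [mem_ball_zero_iff, norm_smul, Real.norm_of_nonneg (by linarith), add_mul,
    div_mul_cancel₀ _ hpos.ne']
  linarith

theorem norm_sub_smul_sub_add_smul (hx : x ≠ 0) (hr : 0 ≤ r) :
    ‖(x - r • (‖x‖⁻¹ • x)) - (x + r • (‖x‖⁻¹ • x))‖ = 2 * r := by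
  have heq : (x - r • (‖x‖⁻¹ • x)) - (x + r • (‖x‖⁻¹ • x)) = -((2 * r) • (‖x‖⁻¹ • x)) := by module
  have hunit : ‖‖x‖⁻¹ • x‖ = 1 := norm_smul_inv_norm (𝕜 := ℝ) hx
  rw [heq, norm_neg, norm_smul, Real.norm_of_nonneg (by positivity), hunit, mul_one]

end StarShaped

section Collar

variable {E : Type*} [NormedAddCommGroup E] {Ω : Set E} {a δ R : ℝ}

theorem frontier_diff_closedBall_subset (Ω : Set E) (a : ℝ) :
    frontier (Ω \ closedBall 0 a) ⊆ frontier Ω ∪ sphere 0 a := by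
  rw [sdiff_eq]
  refine (frontier_inter_subset _ _).trans (union_subset_union inter_subset_left ?_)
  rw [frontier_compl]
  exact inter_subset_right.trans frontier_closedBall_subset_sphere

theorem frontier_ball_diff_closure_subset (Ω : Set E) (R : ℝ) :
    frontier (ball 0 R \ closure Ω) ⊆ frontier Ω ∪ sphere 0 R := by
  rw [sdiff_eq, union_comm]
  refine (frontier_inter_subset _ _).trans (union_subset_union ?_ ?_)
  · exact inter_subset_left.trans frontier_ball_subset_sphere
  · rw [frontier_compl]
    exact inter_subset_right.trans frontier_closure_subset

theorem add_le_norm_of_notMem {x : E} (hin : ball 0 (a + δ) ⊆ Ω) (hx : x ∉ Ω) : a + δ ≤ ‖x‖ := by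
  by_contra! hlt
  exact hx (hin (mem_ball_zero_iff.mpr hlt))

theorem norm_le_sub_of_mem_closure {x : E} (hout : Ω ⊆ ball 0 (R - δ)) (hx : x ∈ closure Ω) :
    ‖x‖ ≤ R - δ :=
  mem_closedBall_zero_iff.mp (closure_ball_subset_closedBall (closure_mono hout hx))

theorem le_norm_sub_of_boundary (hΩ : IsOpen Ω) (hin : ball 0 (a + δ) ⊆ Ω)
    (hout : Ω ⊆ ball 0 (R - δ)) {x y : E} (hx : x ∈ closure (Ω \ closedBall 0 a))
    (hy : y ∈ closure (ball 0 R \ closure Ω)) (hxΩ : x ∉ frontier Ω) (hyΩ : y ∉ frontier Ω)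
    (hxy : x ∉ Ω \ closedBall 0 a ∨ y ∉ ball 0 R \ closure Ω) : δ ≤ ‖x - y‖ := by
  rcases hxy with hxD | hyD
  · have hxa : ‖x‖ = a := by
      have hfr : x ∈ frontier (Ω \ closedBall 0 a) :=
        ⟨hx, fun h => hxD (interior_subset h)⟩
      simpa using (frontier_diff_closedBall_subset Ω a hfr).resolve_left hxΩ
    have hyout : y ∉ Ω := closure_minimal (fun w hw hwΩ => hw.2 (subset_closure hwΩ))
      hΩ.isClosed_compl hy
    linarith [add_le_norm_of_notMem hin hyout, norm_sub_norm_le y x, norm_sub_rev x y]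
  · have hyR : ‖y‖ = R := by
      have hfr : y ∈ frontier (ball 0 R \ closure Ω) :=
        ⟨hy, fun h => hyD (interior_subset h)⟩
      simpa using (frontier_ball_diff_closure_subset Ω R hfr).resolve_left hyΩ
    linarith [norm_le_sub_of_mem_closure hout (closure_mono sdiff_subset hx), norm_sub_norm_le y x,
      norm_sub_rev x y]

end Collar

section CollarEstimate

variable {E : Type*} [NormedAddCommGroup E] [InnerProductSpace ℝ E] [FiniteDimensional ℝ E]
  {Ω : Set E} {a δ R : ℝ} {u v : E → ℝ}

theorem mul_le_inv_sq_mul_norm_sub_sq_of_harmonicContOnCl [Nontrivial E] (hΩ : IsOpen Ω)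
    (hδ : 0 < δ) (hin : ball 0 (a + δ) ⊆ Ω) (hout : Ω ⊆ ball 0 (R - δ))
    (hu : HarmonicContOnCl u (Ω \ closedBall 0 a)) (hu₀ : ∀ x ∈ frontier Ω, u x = 0)
    (hu₁ : ∀ x ∈ sphere (0 : E) a, u x = 1)
    (hv : HarmonicContOnCl v (ball 0 R \ closure Ω)) (hv₀ : ∀ x ∈ frontier Ω, v x = 0)
    (hv₁ : ∀ x ∈ sphere (0 : E) R, v x = 1) {x y : E} (hx : x ∈ closure (Ω \ closedBall 0 a))
    (hy : y ∈ closure (ball 0 R \ closure Ω)) : u x * v y ≤ (δ ^ 2)⁻¹ * ‖x - y‖ ^ 2 := by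
  have hD₁ : IsOpen (Ω \ closedBall 0 a) := hΩ.sdiff isClosed_closedBall
  have hD₂ : IsOpen (ball 0 R \ closure Ω) := isOpen_ball.sdiff isClosed_closure
  have hb₁ : Bornology.IsBounded (Ω \ closedBall 0 a) :=
    isBounded_ball.subset (sdiff_subset.trans hout)
  have hb₂ : Bornology.IsBounded (ball 0 R \ closure Ω) := isBounded_ball.subset sdiff_subset
  have hdisj : Disjoint (Ω \ closedBall 0 a) (ball 0 R \ closure Ω) :=
    disjoint_left.mpr fun w hw hw' => hw'.2 (subset_closure hw.1)
  have hu_mem (w) (hw : w ∈ closure (Ω \ closedBall 0 a)) : u w ∈ Icc 0 1 :=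
    mem_Icc_zero_one_of_harmonicContOnCl hu hD₁ hb₁ (frontier_diff_closedBall_subset Ω a) hu₀ hu₁ hw
  have hv_mem (w) (hw : w ∈ closure (ball 0 R \ closure Ω)) : v w ∈ Icc 0 1 :=
    mem_Icc_zero_one_of_harmonicContOnCl hv hD₂ hb₂ (frontier_ball_diff_closure_subset Ω R) hv₀ hv₁
      hw
  rcases (hu_mem x hx).1.eq_or_lt with hux | hux
  · rw [← hux, zero_mul]; positivity
  rcases (hv_mem y hy).1.eq_or_lt with hvy | hvy
  · rw [← hvy, mul_zero]; positivity
  refine SubharmonicContOnCl.mul_le_mul_norm_sub_sq (.of_harmonicContOnCl hu)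
    (.of_harmonicContOnCl hv) hD₁ hD₂ hb₁ hb₂ hdisj (fun p hp q hq hup hvq hpq => ?_) hx hy hux hvy
  have hdist : δ ≤ ‖p - q‖ := le_norm_sub_of_boundary hΩ hin hout hp hq
    (fun h => hup.ne' (hu₀ p h)) (fun h => hvq.ne' (hv₀ q h)) hpq
  calc u p * v q ≤ 1 := mul_le_one₀ (hu_mem p hp).2 hvq.le (hv_mem q hq).2
    _ = (δ ^ 2)⁻¹ * δ ^ 2 := (inv_mul_cancel₀ (pow_pos hδ 2).ne').symm
    _ ≤ (δ ^ 2)⁻¹ * ‖p - q‖ ^ 2 := by gcongr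

theorem stmt1_general (hΩ : IsOpen Ω) (ha : 0 ≤ a) (hδ : 0 < δ) (hin : ball 0 (a + δ) ⊆ Ω)
    (hout : Ω ⊆ ball 0 (R - δ)) (hstar : ∀ᶠ y in 𝓝 (0 : E), StarConvex ℝ y Ω)
    (hu : HarmonicContOnCl u (Ω \ closedBall 0 a)) (hu₀ : ∀ x ∈ frontier Ω, u x = 0)
    (hu₁ : ∀ x ∈ sphere (0 : E) a, u x = 1)
    (hv : HarmonicContOnCl v (ball 0 R \ closure Ω)) (hv₀ : ∀ x ∈ frontier Ω, v x = 0)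
    (hv₁ : ∀ x ∈ sphere (0 : E) R, v x = 1)
    {x₀ : E} (hx₀ : x₀ ∈ frontier Ω) {r : ℝ} (hr : 0 < r) (hrδ : r < δ) :
    (u (x₀ - r • (‖x₀‖⁻¹ • x₀)) / r) * (v (x₀ + r • (‖x₀‖⁻¹ • x₀)) / r) ≤ 4 / δ ^ 2 := by
  obtain ⟨hcl, hx₀Ω⟩ : x₀ ∈ closure Ω ∧ x₀ ∉ Ω := by
    rwa [hΩ.frontier_eq] at hx₀
  have hlow : a + δ ≤ ‖x₀‖ := add_le_norm_of_notMem hin hx₀Ω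
  have hupp : ‖x₀‖ ≤ R - δ := norm_le_sub_of_mem_closure hout hcl
  have hne : x₀ ≠ 0 := norm_pos_iff.mp (by linarith)
  have : Nontrivial E := nontrivial_of_ne x₀ 0 hne
  have hmem₁ := sub_smul_mem_diff_closedBall hstar ha hcl hr (by linarith)
  have hmem₂ := add_smul_mem_ball_diff_closure (R := R) hstar hne hx₀Ω hr (by linarith)
  have hest := mul_le_inv_sq_mul_norm_sub_sq_of_harmonicContOnCl hΩ hδ hin hout hu hu₀ hu₁ hv hv₀
    hv₁ (subset_closure hmem₁) (subset_closure hmem₂)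
  rw [norm_sub_smul_sub_add_smul hne hr.le] at hest
  rw [div_mul_div_comm, div_le_iff₀ (mul_pos hr hr)]
  exact hest.trans_eq (by ring)

end CollarEstimate

section EuclideanSpace

variable {n : ℕ} {f : EuclideanSpace ℝ (Fin n) → ℝ}

theorem lapl_eq_laplacian {x : EuclideanSpace ℝ (Fin n)} (hf : ContDiffAt ℝ 2 f x) :
    lapl f x = Δ f x := by
  rw [lapl, laplacian_eq_sum_fderiv_fderiv (EuclideanSpace.basisFun (Fin n) ℝ)]
  refine Finset.sum_congr rfl fun i _ => ?_
  rw [fderiv_clm_apply (differentiableAt_fderiv_of_contDiffAt_two hf) (differentiableAt_const _)]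
  simp

theorem IsHarmonicOn.harmonicContOnCl {U : Set (EuclideanSpace ℝ (Fin n))} (hf : IsHarmonicOn f U)
    (hU : IsOpen U) (hcont : ContinuousOn f (closure U)) : HarmonicContOnCl f U where
  harmonicOnNhd x hx := by
    have hsmooth (y) (hy : y ∈ U) : ContDiffAt ℝ 2 f y := hf.1.contDiffAt (hU.mem_nhds hy)
    refine ⟨hsmooth x hx, ?_⟩
    filter_upwards [hU.mem_nhds hx] with y hy
    rw [← lapl_eq_laplacian (hsmooth y hy), hf.2 y hy, Pi.zero_apply]
  continuousOn := hcont

end EuclideanSpace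

theorem stmt1 (n : ℕ) (hn : 3 ≤ n) :
    ∃ C : ℝ, 0 < C ∧
      ∀ (Ω₀ : Set (EuclideanSpace ℝ (Fin n))) (hp hm : EuclideanSpace ℝ (Fin n) → ℝ),
        IsOpen Ω₀ → Bornology.IsBounded Ω₀ →
        ball (0 : EuclideanSpace ℝ (Fin n)) (4/3) ⊆ Ω₀ →
        Ω₀ ⊆ ball (0 : EuclideanSpace ℝ (Fin n)) (5/3) →
        (∀ y ∈ ball (0 : EuclideanSpace ℝ (Fin n)) 1, ∀ x ∈ Ω₀, segment ℝ y x ⊆ Ω₀) →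
        ContinuousOn hp (closure (Ω₀ \ closedBall 0 1)) →
        IsHarmonicOn hp (Ω₀ \ closedBall 0 1) →
        (∀ x ∈ frontier Ω₀, hp x = 0) →
        (∀ x ∈ sphere (0 : EuclideanSpace ℝ (Fin n)) 1, hp x = 1) →
        ContinuousOn hm (closure (ball (0 : EuclideanSpace ℝ (Fin n)) 2 \ closure Ω₀)) →
        IsHarmonicOn hm (ball 0 2 \ closure Ω₀) →
        (∀ x ∈ frontier Ω₀, hm x = 0) →
        (∀ x ∈ sphere (0 : EuclideanSpace ℝ (Fin n)) 2, hm x = 1) →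
        ∀ x₀ ∈ frontier Ω₀, ∀ r : ℝ, 0 < r → r ≤ 1/6 →
          (hp (x₀ - r • (‖x₀‖⁻¹ • x₀)) / r) * (hm (x₀ + r • (‖x₀‖⁻¹ • x₀)) / r) ≤ C := by
  refine ⟨4 / (1 / 3) ^ 2, by norm_num, fun Ω₀ hp hm hΩ _ hin hout hstar hpcont hpharm hp₀ hp₁
    hmcont hmharm hm₀ hm₁ x₀ hx₀ r hr hr_le => ?_⟩
  refine stmt1_general (a := 1) (R := 2) hΩ zero_le_one (by norm_num) (by norm_num [hin])
    (by norm_num [hout]) ?_ (hpharm.harmonicContOnCl (hΩ.sdiff isClosed_closedBall) hpcont) hp₀ hp₁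
    (hmharm.harmonicContOnCl (isOpen_ball.sdiff isClosed_closure) hmcont) hm₀ hm₁ hx₀ hr
    (by linarith)
  filter_upwards [ball_mem_nhds 0 one_pos] with y hy
  exact starConvex_iff_segment_subset.mpr fun x hx => hstar y hy x hx
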